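/- Let a, b > 0 and let X, W be independent random variables with W ~ β²_{b,a} and X valued in (0,∞). Then X has the same distribution as 1/(1 + X·W) if and only if X ~ μ_{a,a,b}. -/

import Mathlib

open MeasureTheory ProbabilityTheory Real Set Filter Topology

noncomputable def gammaDens (p σ y : ℝ) : ℝ :=
  if 0 < y then σ ^ p / Real.Gamma p * Real.exp (-(σ * y)) * y ^ (p - 1) else 0

noncomputable def gammaM (p σ : ℝ) : Measure ℝ :=
  MeasureTheory.volume.withDensity fun y => ENNReal.ofReal (gammaDens p σ y)

noncomputable def beta1Dens (p q x : ℝ) : ℝ :=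
  if 0 < x ∧ x < 1 then
    Real.Gamma (p + q) / (Real.Gamma p * Real.Gamma q) * x ^ (p - 1) * (1 - x) ^ (q - 1)
  else 0

noncomputable def beta1 (p q : ℝ) : Measure ℝ :=
  MeasureTheory.volume.withDensity fun x => ENNReal.ofReal (beta1Dens p q x)

noncomputable def beta2Dens (p q y : ℝ) : ℝ :=
  if 0 < y then
    Real.Gamma (p + q) / (Real.Gamma p * Real.Gamma q) * y ^ (p - 1) * (1 + y) ^ (-(p + q))
  else 0

noncomputable def beta2 (p q : ℝ) : Measure ℝ :=
  MeasureTheory.volume.withDensity fun y => ENNReal.ofReal (beta2Dens p q y)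

/-- Pochhammer (rising factorial) symbol `(a)_n`. -/
noncomputable def poch (a : ℝ) (n : ℕ) : ℝ := ∏ i ∈ Finset.range n, (a + (i : ℝ))

/-- Gauss hypergeometric function `₂F₁(a,b;c;x)`. -/
noncomputable def F21 (a b c x : ℝ) : ℝ :=
  ∑' n : ℕ, poch a n * poch b n / ((n.factorial : ℝ) * poch c n) * x ^ n

/-- Generalized hypergeometric `₃F₂(a₁,a₂,a₃;b₁,b₂;1)` at unit argument. -/
noncomputable def F32one (a1 a2 a3 b1 b2 : ℝ) : ℝ :=
  ∑' n : ℕ, poch a1 n * poch a2 n * poch a3 n /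
    ((n.factorial : ℝ) * poch b1 n * poch b2 n)

/-- Normalizing constant of the real beta-hypergeometric distribution. -/
noncomputable def Cbh (a a' b : ℝ) : ℝ :=
  Real.Gamma (a + b) / (Real.Gamma a * Real.Gamma b * F32one a a b (a + b) (a + a'))

noncomputable def bhDens (a a' b x : ℝ) : ℝ :=
  if 0 < x ∧ x < 1 then
    Cbh a a' b * x ^ (a - 1) * (1 - x) ^ (b - 1) * F21 a b (a + a') x
  else 0

/-- The real beta-hypergeometric distribution `μ_{a,a',b}`. -/
noncomputable def bhMeasure (a a' b : ℝ) : Measure ℝ :=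
  MeasureTheory.volume.withDensity fun x => ENNReal.ofReal (bhDens a a' b x)

open scoped ENNReal

lemma poch_pos {s : ℝ} (hs : 0 < s) (n : ℕ) : 0 < poch s n := by
  unfold poch
  exact Finset.prod_pos fun i _ => by positivity

lemma poch_succ (s : ℝ) (n : ℕ) : poch s (n + 1) = poch s n * (s + n) := by
  simp [poch, Finset.prod_range_succ]

lemma Gamma_add_nat_poch {s : ℝ} (hs : 0 < s) (n : ℕ) :
    Real.Gamma (s + n) = poch s n * Real.Gamma s := by
  induction n with
  | zero => simp [poch]
  | succ n ih =>
    have h : s + ((n + 1 : ℕ) : ℝ) = (s + n) + 1 := by push_cast; ring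
    rw [h, Real.Gamma_add_one (by positivity), ih, poch_succ]; ring

lemma choose_poch (s : ℝ) (n : ℕ) :
    Ring.choose (s + n - 1) n = poch s n / n.factorial := by
  have h := Ring.factorial_nsmul_multichoose_eq_ascPochhammer s n
  rw [Polynomial.ascPochhammer_smeval_eq_eval] at h
  have h2 : (ascPochhammer ℝ n).eval s = poch s n := by
    induction n with
    | zero => simp [poch]
    | succ n ih =>
      rw [ascPochhammer_succ_eval, poch_succ, ih]
      exact Ring.factorial_nsmul_multichoose_eq_ascPochhammer s n |>.trans
        (Polynomial.ascPochhammer_smeval_eq_eval _ _)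
  rw [Ring.choose, eq_div_iff (by positivity), ← h2, ← h, nsmul_eq_mul, mul_comm]
  congr 2
  ring

lemma binom_hasSum (s : ℝ) {x : ℝ} (hx : |x| < 1) :
    HasSum (fun n : ℕ => poch s n / n.factorial * x ^ n) ((1 - x) ^ (-s)) := by
  have h := (Real.one_div_one_sub_rpow_hasFPowerSeriesOnBall_zero s).hasSum (y := x)
    (by simpa [enorm_eq_nnnorm, ← NNReal.coe_lt_coe] using hx)
  simp only [FormalMultilinearSeries.ofScalars_apply_eq, choose_poch] at h
  rw [Real.rpow_neg (by linarith [abs_lt.1 hx])]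
  simpa using h

lemma binom_ennreal {s : ℝ} (hs : 0 < s) {x : ℝ} (h0 : 0 ≤ x) (h1 : x < 1) :
    ∑' n : ℕ, ENNReal.ofReal (poch s n / n.factorial * x ^ n)
      = ENNReal.ofReal ((1 - x) ^ (-s)) := by
  have h := binom_hasSum s (x := x) (by rwa [abs_of_nonneg h0])
  rw [← h.tsum_eq, ENNReal.ofReal_tsum_of_nonneg _ h.summable]
  intro n
  have := poch_pos hs n
  positivity

lemma beta_lint {p q : ℝ} (hp : 0 < p) (hq : 0 < q) :
    ∫⁻ x in Ioo (0:ℝ) 1, ENNReal.ofReal (x ^ (p - 1) * (1 - x) ^ (q - 1))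
      = ENNReal.ofReal (Real.Gamma p * Real.Gamma q / Real.Gamma (p + q)) := by
  have h := lintegral_betaPDF_eq_one hp hq
  rw [lintegral_betaPDF] at h
  have hb := beta_pos hp hq
  have : ∀ x : ℝ, ENNReal.ofReal (1 / beta p q * x ^ (p - 1) * (1 - x) ^ (q - 1))
      = ENNReal.ofReal (1 / beta p q) * ENNReal.ofReal (x ^ (p - 1) * (1 - x) ^ (q - 1)) := by
    intro x
    rw [← ENNReal.ofReal_mul (by positivity), mul_assoc]
  simp_rw [this] at h
  rw [lintegral_const_mul _ (by fun_prop)] at h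
  change _ = ENNReal.ofReal (beta p q)
  calc _ = ENNReal.ofReal (beta p q) * (ENNReal.ofReal (1 / beta p q) * _) := by
        rw [← mul_assoc, ← ENNReal.ofReal_mul hb.le, mul_one_div_cancel hb.ne', ENNReal.ofReal_one,
          one_mul]
    _ = _ := by rw [h, mul_one]

/-- Gauss summation. -/
lemma gauss_sum {A B C : ℝ} (hA : 0 < A) (hB : 0 < B) (hC : A + B < C) :
    ∑' n : ℕ, ENNReal.ofReal (poch A n * poch B n / (n.factorial * poch C n))
      = ENNReal.ofReal (Real.Gamma C * Real.Gamma (C - A - B) /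
          (Real.Gamma (C - A) * Real.Gamma (C - B))) := by
  have hgB := Real.Gamma_pos_of_pos hB
  have hgC := Real.Gamma_pos_of_pos (show 0 < C by linarith)
  have hgCB := Real.Gamma_pos_of_pos (show 0 < C - B by linarith)
  have hgCA := Real.Gamma_pos_of_pos (show 0 < C - A by linarith)
  have h1 := beta_lint hB (show 0 < C - A - B by linarith)
  have h2 : ∀ x ∈ Ioo (0:ℝ) 1, ENNReal.ofReal (x ^ (B - 1) * (1 - x) ^ (C - A - B - 1))
      = ∑' n : ℕ, ENNReal.ofReal (poch A n / n.factorial) *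
        ENNReal.ofReal (x ^ (B + n - 1) * (1 - x) ^ (C - B - 1)) := by
    rintro x ⟨hx0, hx1⟩
    have hx1' : 0 < 1 - x := by linarith
    have : x ^ (B - 1) * (1 - x) ^ (C - A - B - 1)
        = (x ^ (B - 1) * (1 - x) ^ (C - B - 1)) * (1 - x) ^ (-A) := by
      rw [mul_assoc, ← Real.rpow_add hx1']; ring_nf
    rw [this, ENNReal.ofReal_mul (by positivity), ← binom_ennreal hA hx0.le hx1,
      ← ENNReal.tsum_mul_left]
    refine tsum_congr fun n => ?_
    have := poch_pos hA n
    rw [← ENNReal.ofReal_mul (by positivity), ← ENNReal.ofReal_mul (by positivity)]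
    congr 1
    rw [show B + n - 1 = (B - 1) + (n : ℝ) by ring, Real.rpow_add hx0, Real.rpow_natCast]
    ring
  rw [setLIntegral_congr_fun measurableSet_Ioo h2,
    lintegral_tsum (fun n => by fun_prop)] at h1
  have h3 : ∀ n : ℕ, ∫⁻ x in Ioo (0:ℝ) 1, ENNReal.ofReal (poch A n / n.factorial) *
        ENNReal.ofReal (x ^ (B + n - 1) * (1 - x) ^ (C - B - 1))
      = ENNReal.ofReal (poch A n * poch B n / (n.factorial * poch C n)) *
        ENNReal.ofReal (Real.Gamma B * Real.Gamma (C - B) / Real.Gamma C) := by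
    intro n
    have hpA := poch_pos hA n
    have hpB := poch_pos hB n
    have hpC := poch_pos (show 0 < C by linarith) n
    rw [lintegral_const_mul _ (by fun_prop), beta_lint (by positivity) (by linarith),
      ← ENNReal.ofReal_mul (by positivity), ← ENNReal.ofReal_mul (by positivity),
      show B + n + (C - B) = C + n by ring, Gamma_add_nat_poch hB,
      Gamma_add_nat_poch (show 0 < C by linarith)]
    congr 1
    field_simp
  simp_rw [h3] at h1
  rw [ENNReal.tsum_mul_right] at h1
  set S := ∑' n : ℕ, ENNReal.ofReal (poch A n * poch B n / (n.factorial * poch C n))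
  calc S = S * ENNReal.ofReal (Real.Gamma B * Real.Gamma (C - B) / Real.Gamma C) *
        ENNReal.ofReal (Real.Gamma C / (Real.Gamma B * Real.Gamma (C - B))) := by
        rw [mul_assoc, ← ENNReal.ofReal_mul (by positivity)]
        rw [div_mul_div_cancel₀ hgC.ne', div_self (by positivity), ENNReal.ofReal_one, mul_one]
    _ = _ := by
        rw [h1, ← ENNReal.ofReal_mul (by
          have := Real.Gamma_pos_of_pos (show 0 < C - A - B by linarith)
          rw [show B + (C - A - B) = C - A by ring]
          positivity), show B + (C - A - B) = C - A by ring]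
        congr 1
        field_simp

/-- coefficients of the hypergeometric function -/
noncomputable def hco (a b : ℝ) (n : ℕ) : ℝ :=
  poch a n * poch b n / ((n.factorial : ℝ) * poch (a + a) n)

lemma hco_pos {a b : ℝ} (ha : 0 < a) (hb : 0 < b) (n : ℕ) : 0 < hco a b n := by
  have := poch_pos ha n
  have := poch_pos hb n
  have := poch_pos (add_pos ha ha) n
  unfold hco
  positivity

noncomputable def Fh (a b x : ℝ) : ℝ≥0∞ := ∑' n : ℕ, ENNReal.ofReal (hco a b n * x ^ n)

lemma measurable_Fh (a b : ℝ) : Measurable (Fh a b) := by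
  unfold Fh
  exact Measurable.tsum fun n => by fun_prop

lemma F21_summable {a b : ℝ} (ha : 0 < a) (hb : 0 < b) {x : ℝ} (h0 : 0 ≤ x) (h1 : x < 1) :
    Summable fun n : ℕ => hco a b n * x ^ n := by
  have h := (binom_hasSum b (x := x) (by rwa [abs_of_nonneg h0])).summable
  refine Summable.of_nonneg_of_le
    (fun n => by have := hco_pos ha hb n; positivity) (fun n => ?_) h
  have h1 := poch_pos ha n
  have h2 := poch_pos hb n
  have h3 := poch_pos (add_pos ha ha) n
  have h4 : poch a n ≤ poch (a + a) n := by
    unfold poch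
    exact Finset.prod_le_prod (fun i _ => by positivity) (fun i _ => by linarith)
  refine mul_le_mul_of_nonneg_right ?_ (by positivity)
  unfold hco
  rw [div_le_div_iff₀ (by positivity) (by positivity)]
  have : 0 ≤ poch b n * n.factorial := by positivity
  nlinarith

lemma ofReal_F21 {a b : ℝ} (ha : 0 < a) (hb : 0 < b) {x : ℝ} (h0 : 0 ≤ x) (h1 : x < 1) :
    ENNReal.ofReal (F21 a b (a + a) x) = Fh a b x :=
  ENNReal.ofReal_tsum_of_nonneg (fun n => by have := hco_pos ha hb n; positivity)
    (F21_summable ha hb h0 h1)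

lemma F21_pos {a b : ℝ} (ha : 0 < a) (hb : 0 < b) {x : ℝ} (h0 : 0 < x) (h1 : x < 1) :
    0 < F21 a b (a + a) x :=
  (F21_summable ha hb h0.le h1).tsum_pos
    (fun n => by have := hco_pos ha hb n; positivity) 0 (by have := hco_pos ha hb 0; positivity)

/-- integral against a Beta weight -/
lemma lint_Fh {a b p q : ℝ} (ha : 0 < a) (hb : 0 < b) (hp : 0 < p) (hq : 0 < q) :
    ∫⁻ x in Ioo (0:ℝ) 1, ENNReal.ofReal (x ^ (p - 1) * (1 - x) ^ (q - 1)) * Fh a b x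
      = ∑' n : ℕ, ENNReal.ofReal (hco a b n *
          (Real.Gamma (p + n) * Real.Gamma q / Real.Gamma (p + n + q))) := by
  have h2 : ∀ x ∈ Ioo (0:ℝ) 1, ENNReal.ofReal (x ^ (p - 1) * (1 - x) ^ (q - 1)) * Fh a b x
      = ∑' n : ℕ, ENNReal.ofReal (hco a b n) *
        ENNReal.ofReal (x ^ (p + n - 1) * (1 - x) ^ (q - 1)) := by
    rintro x ⟨hx0, hx1⟩
    have hx1' : 0 < 1 - x := by linarith
    rw [Fh, ← ENNReal.tsum_mul_left]
    refine tsum_congr fun n => ?_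
    have := hco_pos ha hb n
    rw [← ENNReal.ofReal_mul (by positivity), ← ENNReal.ofReal_mul (by positivity)]
    congr 1
    rw [show p + n - 1 = (p - 1) + (n : ℝ) by ring, Real.rpow_add hx0, Real.rpow_natCast]
    ring
  rw [setLIntegral_congr_fun measurableSet_Ioo h2, lintegral_tsum (fun n => by fun_prop)]
  refine tsum_congr fun n => ?_
  rw [lintegral_const_mul _ (by fun_prop), beta_lint (by positivity) hq,
    ← ENNReal.ofReal_mul (hco_pos ha hb n).le]

lemma lint_L4 {a b : ℝ} (ha : 0 < a) (hb : 0 < b) (n : ℕ) :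
    ∫⁻ x in Ioo (0:ℝ) 1, ENNReal.ofReal (x ^ (a + a - 1) * (1 - x) ^ (b + n - 1)) * Fh a b x
      = ENNReal.ofReal (Real.Gamma (b + n) * Real.Gamma (a + a) * Real.Gamma (a + n) /
          (Real.Gamma (a + b + n) * Real.Gamma (a + a + n))) := by
  rw [lint_Fh ha hb (by positivity) (by positivity)]
  have hg := gauss_sum ha hb (C := a + a + b + n) (by
    have : (0:ℝ) ≤ n := by positivity
    linarith)
  have g1 := Real.Gamma_pos_of_pos (show 0 < b + n by positivity)
  have g2 := Real.Gamma_pos_of_pos (show 0 < a + a by positivity)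
  have g3 := Real.Gamma_pos_of_pos (show 0 < a + a + b + n by positivity)
  have : ∀ m : ℕ, ENNReal.ofReal (hco a b m *
          (Real.Gamma (a + a + m) * Real.Gamma (b + n) / Real.Gamma (a + a + m + (b + n))))
      = ENNReal.ofReal (Real.Gamma (b + n) * Real.Gamma (a + a) / Real.Gamma (a + a + b + n)) *
        ENNReal.ofReal (poch a m * poch b m / (m.factorial * poch (a + a + b + n) m)) := by
    intro m
    have := poch_pos (add_pos ha ha) m
    have := poch_pos (show 0 < a + a + b + n by positivity) m
    rw [← ENNReal.ofReal_mul (by positivity),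
      show a + a + m + (b + n) = (a + a + b + n) + m by ring,
      Gamma_add_nat_poch (by positivity), Gamma_add_nat_poch (s := a + a + b + n) (by positivity)]
    congr 1
    unfold hco
    generalize poch (a + a) m = P1 at *
    generalize poch (a + a + b + n) m = P2 at *
    generalize Real.Gamma (a + a) = P3 at *
    generalize Real.Gamma (a + a + b + n) = P4 at *
    field_simp
  simp_rw [this]
  rw [ENNReal.tsum_mul_left, hg, ← ENNReal.ofReal_mul (by positivity)]
  congr 1
  rw [show a + a + b + n - a - b = a + n by ring, show a + a + b + n - a = a + b + n by ring,
    show a + a + b + n - b = a + a + n by ring]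
  have := Real.Gamma_pos_of_pos (show 0 < a + b + n by positivity)
  have := Real.Gamma_pos_of_pos (show 0 < a + a + n by positivity)
  field_simp

lemma lint_L5 {a b : ℝ} (ha : 0 < a) (hb : 0 < b) {y : ℝ} (h0 : 0 < y) (h1 : y < 1) :
    ∫⁻ x in Ioo (0:ℝ) 1, ENNReal.ofReal (Real.Gamma (b + a) / (Real.Gamma b * Real.Gamma a) *
      (x ^ (a + a - 1) * (1 - x) ^ (b - 1) * (1 - y * (1 - x)) ^ (-(b + a)))) * Fh a b x
      = Fh a b y := by
  have gb := Real.Gamma_pos_of_pos hb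
  have ga := Real.Gamma_pos_of_pos ha
  have gab := Real.Gamma_pos_of_pos (add_pos hb ha)
  have g2 := Real.Gamma_pos_of_pos (add_pos ha ha)
  have h2 : ∀ x ∈ Ioo (0:ℝ) 1, ENNReal.ofReal (Real.Gamma (b + a) / (Real.Gamma b * Real.Gamma a) *
      (x ^ (a + a - 1) * (1 - x) ^ (b - 1) * (1 - y * (1 - x)) ^ (-(b + a)))) * Fh a b x
      = ∑' n : ℕ, ENNReal.ofReal (Real.Gamma (b + a) / (Real.Gamma b * Real.Gamma a) *
          (poch (b + a) n / n.factorial * y ^ n)) *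
        (ENNReal.ofReal (x ^ (a + a - 1) * (1 - x) ^ (b + n - 1)) * Fh a b x) := by
    rintro x ⟨hx0, hx1⟩
    have hx1' : 0 < 1 - x := by linarith
    have hB := binom_ennreal (s := b + a) (by positivity) (x := y * (1 - x)) (by positivity)
      (by nlinarith)
    rw [← mul_assoc, ENNReal.ofReal_mul (by positivity), ← hB, ← ENNReal.tsum_mul_left,
      ← ENNReal.tsum_mul_right]
    refine tsum_congr fun n => ?_
    have := poch_pos (add_pos hb ha) n
    rw [← mul_assoc (ENNReal.ofReal _), ← ENNReal.ofReal_mul (by positivity), ← ENNReal.ofReal_mul (by positivity)]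
    congr 2
    rw [show b + n - 1 = (b - 1) + (n : ℝ) by ring, Real.rpow_add hx1', Real.rpow_natCast, mul_pow]
    ring
  have hm := measurable_Fh a b
  rw [setLIntegral_congr_fun measurableSet_Ioo h2, lintegral_tsum (fun n => by fun_prop)]
  refine tsum_congr fun n => ?_
  have p1 := poch_pos (add_pos hb ha) n
  have p2 := poch_pos (add_pos ha ha) n
  rw [lintegral_const_mul _ (by fun_prop), lint_L4 ha hb, ← ENNReal.ofReal_mul (by positivity)]
  congr 1
  rw [Gamma_add_nat_poch ha, Gamma_add_nat_poch hb, show a + b = b + a by ring,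
    Gamma_add_nat_poch (add_pos hb ha), Gamma_add_nat_poch (add_pos ha ha)]
  unfold hco
  field_simp

/-- normalization -/
lemma F32_fact {a b : ℝ} (ha : 0 < a) (hb : 0 < b) :
    0 < F32one a a b (a + b) (a + a) ∧
    ENNReal.ofReal (F32one a a b (a + b) (a + a)) = ∑' n : ℕ, ENNReal.ofReal
      (poch a n * poch a n * poch b n / (n.factorial * poch (a + b) n * poch (a + a) n)) := by
  have hpos : ∀ n : ℕ, 0 < poch a n * poch a n * poch b n /
      (n.factorial * poch (a + b) n * poch (a + a) n) := by
    intro n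
    have := poch_pos ha n
    have := poch_pos hb n
    have := poch_pos (add_pos ha ha) n
    have := poch_pos (add_pos ha hb) n
    positivity
  have hg := gauss_sum ha hb (C := a + a + b) (by linarith)
  have hs0 : Summable fun n : ℕ => poch a n * poch b n / (n.factorial * poch (a + a + b) n) := by
    have hne : ∑' n : ℕ, ENNReal.ofReal (poch a n * poch b n / (n.factorial * poch (a + a + b) n))
        ≠ ⊤ := by rw [hg]; exact ENNReal.ofReal_ne_top
    have := ENNReal.summable_toReal hne
    refine this.congr fun n => ENNReal.toReal_ofReal ?_
    have := poch_pos ha n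
    have := poch_pos hb n
    have := poch_pos (show 0 < a + a + b by positivity) n
    positivity
  have hs : Summable fun n : ℕ => poch a n * poch a n * poch b n /
      (n.factorial * poch (a + b) n * poch (a + a) n) := by
    refine Summable.of_nonneg_of_le (fun n => (hpos n).le) (fun n => ?_) hs0
    have p1 := poch_pos ha n
    have p2 := poch_pos hb n
    have p3 := poch_pos (add_pos ha ha) n
    have p4 := poch_pos (add_pos ha hb) n
    have p5 := poch_pos (show 0 < a + a + b by positivity) n
    have key : poch a n * poch (a + a + b) n ≤ poch (a + b) n * poch (a + a) n := by
      unfold poch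
      rw [← Finset.prod_mul_distrib, ← Finset.prod_mul_distrib]
      refine Finset.prod_le_prod (fun i _ => by positivity) (fun i _ => ?_)
      have : 0 < a * b := by positivity
      nlinarith
    rw [div_le_div_iff₀ (by positivity) (by positivity)]
    have : 0 ≤ poch a n * poch b n * n.factorial := by positivity
    nlinarith [mul_le_mul_of_nonneg_left key this]
  refine ⟨hs.tsum_pos (fun n => (hpos n).le) 0 (hpos 0), ?_⟩
  exact ENNReal.ofReal_tsum_of_nonneg (fun n => (hpos n).le) hs

lemma Cbh_pos {a b : ℝ} (ha : 0 < a) (hb : 0 < b) : 0 < Cbh a a b := by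
  have gb := Real.Gamma_pos_of_pos hb
  have ga := Real.Gamma_pos_of_pos ha
  have gab := Real.Gamma_pos_of_pos (add_pos ha hb)
  have := (F32_fact ha hb).1
  unfold Cbh
  positivity

lemma bh_dens_eq {a b : ℝ} (ha : 0 < a) (hb : 0 < b) (x : ℝ) :
    ENNReal.ofReal (bhDens a a b x) = (Ioo (0:ℝ) 1).indicator (fun x =>
      ENNReal.ofReal (Cbh a a b) *
        (ENNReal.ofReal (x ^ (a - 1) * (1 - x) ^ (b - 1)) * Fh a b x)) x := by
  by_cases hx : x ∈ Ioo (0:ℝ) 1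
  · rw [indicator_of_mem hx, bhDens, if_pos ⟨hx.1, hx.2⟩, ← ofReal_F21 ha hb hx.1.le hx.2]
    have := Cbh_pos ha hb
    have := hx.1
    have : 0 < 1 - x := by linarith [hx.2]
    rw [← ENNReal.ofReal_mul (by positivity), ← ENNReal.ofReal_mul (by positivity)]
    congr 1
    ring
  · rw [indicator_of_notMem hx, bhDens, if_neg (by simpa using hx), ENNReal.ofReal_zero]

lemma measurable_bh {a b : ℝ} (ha : 0 < a) (hb : 0 < b) :
    Measurable fun x => ENNReal.ofReal (bhDens a a b x) := by
  have hm := measurable_Fh a b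
  simp_rw [bh_dens_eq ha hb]
  exact Measurable.indicator (by fun_prop) measurableSet_Ioo

lemma bh_total {a b : ℝ} (ha : 0 < a) (hb : 0 < b) :
    ∫⁻ x, ENNReal.ofReal (bhDens a a b x) = 1 := by
  have hm := measurable_Fh a b
  have gb := Real.Gamma_pos_of_pos hb
  have ga := Real.Gamma_pos_of_pos ha
  have gab := Real.Gamma_pos_of_pos (add_pos ha hb)
  obtain ⟨h1, h2⟩ := F32_fact ha hb
  have hC := Cbh_pos ha hb
  simp_rw [bh_dens_eq ha hb]
  rw [lintegral_indicator measurableSet_Ioo, lintegral_const_mul _ (by fun_prop),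
    lint_Fh ha hb ha hb]
  have : ∀ n : ℕ, ENNReal.ofReal (hco a b n *
          (Real.Gamma (a + n) * Real.Gamma b / Real.Gamma (a + n + b)))
      = ENNReal.ofReal (Real.Gamma a * Real.Gamma b / Real.Gamma (a + b)) * ENNReal.ofReal
      (poch a n * poch a n * poch b n / (n.factorial * poch (a + b) n * poch (a + a) n)) := by
    intro n
    have := poch_pos (add_pos ha ha) n
    have := poch_pos (add_pos ha hb) n
    rw [← ENNReal.ofReal_mul (by positivity), show a + n + b = a + b + n by ring,
      Gamma_add_nat_poch ha, Gamma_add_nat_poch (add_pos ha hb)]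
    congr 1
    unfold hco
    field_simp
  simp_rw [this]
  rw [ENNReal.tsum_mul_left, ← h2, ← ENNReal.ofReal_mul (by positivity),
    ← ENNReal.ofReal_mul (by positivity), ← ENNReal.ofReal_one]
  congr 1
  unfold Cbh
  generalize F32one a a b (a + b) (a + a) = P1 at *
  field_simp

/-- transition density -/
noncomputable def Kd (a b x y : ℝ) : ℝ≥0∞ :=
  if 0 < x ∧ 0 < y ∧ y < 1 then
    ENNReal.ofReal (Real.Gamma (b + a) / (Real.Gamma b * Real.Gamma a) *
      (y ^ (a - 1) * (1 - y) ^ (b - 1) * x ^ a * (1 - y * (1 - x)) ^ (-(b + a))))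
  else 0

lemma measurable_Kd (a b : ℝ) : Measurable fun p : ℝ × ℝ => Kd a b p.1 p.2 := by
  unfold Kd
  refine Measurable.ite ?_ (by fun_prop) measurable_const
  exact ((measurableSet_lt measurable_const measurable_fst).inter
    ((measurableSet_lt measurable_const measurable_snd).inter
      (measurableSet_lt measurable_snd measurable_const)))

lemma Kd_pos {a b x y : ℝ} (ha : 0 < a) (hb : 0 < b) (hx : 0 < x) (hy : y ∈ Ioo (0:ℝ) 1) :
    Kd a b x y ≠ 0 := by
  have gb := Real.Gamma_pos_of_pos hb
  have ga := Real.Gamma_pos_of_pos ha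
  have gab := Real.Gamma_pos_of_pos (add_pos hb ha)
  have h0 := hy.1
  have h1 : 0 < 1 - y := by linarith [hy.2]
  have h2 : 0 < 1 - y * (1 - x) := by nlinarith [mul_pos h0 hx]
  rw [Kd, if_pos ⟨hx, hy.1, hy.2⟩]
  have : 0 < Real.Gamma (b + a) / (Real.Gamma b * Real.Gamma a) *
      (y ^ (a - 1) * (1 - y) ^ (b - 1) * x ^ a * (1 - y * (1 - x)) ^ (-(b + a))) := by positivity
  simpa using this

lemma Kd_zero {a b x y : ℝ} (hy : y ∉ Ioo (0:ℝ) 1) : Kd a b x y = 0 := by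
  rw [Kd, if_neg]
  rintro ⟨_, h1, h2⟩
  exact hy ⟨h1, h2⟩

lemma image_lem {x : ℝ} (hx : 0 < x) :
    (fun y : ℝ => (1 - y) / (x * y)) '' Ioo (0:ℝ) 1 = Ioi 0 := by
  ext w
  constructor
  · rintro ⟨y, ⟨h0, h1⟩, rfl⟩
    have : 0 < 1 - y := by linarith
    change 0 < (1 - y) / (x * y)
    positivity
  · intro hw
    have hw : 0 < w := hw
    refine ⟨1 / (1 + x * w), ⟨by positivity, ?_⟩, ?_⟩
    · rw [div_lt_one (by positivity)]; linarith [mul_pos hx hw]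
    · simp only
      field_simp
      ring

lemma kernel_lem {a b x : ℝ} (ha : 0 < a) (hb : 0 < b) (hx : 0 < x) {g : ℝ → ℝ≥0∞}
    (hg : Measurable g) :
    ∫⁻ w, g (1 / (1 + x * w)) ∂(beta2 b a) = ∫⁻ y, Kd a b x y * g y := by
  have gb := Real.Gamma_pos_of_pos hb
  have ga := Real.Gamma_pos_of_pos ha
  have gab := Real.Gamma_pos_of_pos (add_pos hb ha)
  have hmd : Measurable fun y => ENNReal.ofReal (beta2Dens b a y) := by
    unfold beta2Dens
    refine ENNReal.measurable_ofReal.comp (Measurable.ite ?_ (by fun_prop) measurable_const)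
    exact measurableSet_lt measurable_const measurable_id
  rw [beta2, lintegral_withDensity_eq_lintegral_mul _ hmd (by fun_prop)]
  have e1 : ∀ w : ℝ, ((fun y => ENNReal.ofReal (beta2Dens b a y)) *
      fun w => g (1 / (1 + x * w))) w = (Ioi (0:ℝ)).indicator (fun w =>
        ENNReal.ofReal (Real.Gamma (b + a) / (Real.Gamma b * Real.Gamma a) * w ^ (b - 1) *
          (1 + w) ^ (-(b + a))) * g (1 / (1 + x * w))) w := by
    intro w
    by_cases hw : 0 < w
    · rw [indicator_of_mem (show w ∈ Ioi (0:ℝ) from hw)]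
      simp [beta2Dens, hw]
    · rw [indicator_of_notMem (show w ∉ Ioi (0:ℝ) from hw)]
      simp [beta2Dens, hw]
  simp_rw [e1]
  rw [lintegral_indicator measurableSet_Ioi, ← image_lem hx]
  rw [lintegral_image_eq_lintegral_abs_deriv_mul (f' := fun y => -1 / (x * y ^ 2))
    measurableSet_Ioo]
  · rw [← lintegral_indicator measurableSet_Ioo]
    refine lintegral_congr fun y => ?_
    by_cases hy : y ∈ Ioo (0:ℝ) 1
    · rw [indicator_of_mem hy, Kd, if_pos ⟨hx, hy.1, hy.2⟩]
      have h0 := hy.1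
      have h1 : 0 < 1 - y := by linarith [hy.2]
      have h2 : 0 < 1 - y * (1 - x) := by nlinarith [mul_pos h0 hx]
      have e2 : 1 / (1 + x * ((1 - y) / (x * y))) = y := by
        field_simp
        ring
      have e3 : 1 + (1 - y) / (x * y) = (1 - y * (1 - x)) / (x * y) := by
        field_simp
        ring
      have e4 : |(-1) / (x * y ^ 2)| = 1 / (x * y ^ 2) := by
        rw [neg_div, abs_neg, abs_of_pos (by positivity)]
      rw [e2, e3, e4, ← mul_assoc, ← ENNReal.ofReal_mul (by positivity)]
      congr 2
      rw [Real.div_rpow h1.le (by positivity), Real.div_rpow h2.le (by positivity),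
        Real.mul_rpow hx.le h0.le, Real.mul_rpow hx.le h0.le]
      have ex : x ^ a = (x * x ^ (b - 1) * x ^ (-(b + a)))⁻¹ := by
        rw [← Real.rpow_one_add' hx.le (by linarith), ← Real.rpow_add hx, ← Real.rpow_neg hx.le]
        congr 1
        ring
      have ey : y ^ (a - 1) = (y ^ 2 * y ^ (b - 1) * y ^ (-(b + a)))⁻¹ := by
        rw [← Real.rpow_natCast, ← Real.rpow_add h0, ← Real.rpow_add h0, ← Real.rpow_neg h0.le]
        congr 1
        push_cast
        ring
      rw [ex, ey]
      field_simp
    · rw [indicator_of_notMem hy, Kd_zero hy, zero_mul]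
  · intro y hy
    have h0 := hy.1
    have h := ((hasDerivAt_id y).const_sub 1).div ((hasDerivAt_id y).const_mul x)
      (by simp only [id]; positivity)
    refine (h.congr_deriv ?_).hasDerivWithinAt
    simp only [id]
    field_simp
    ring
  · intro y hy z hz h
    have h0 := hy.1
    have h1 := hz.1
    simp only at h
    rw [div_eq_div_iff (by positivity) (by positivity)] at h
    have : x * (z - y) = 0 := by linarith
    rcases mul_eq_zero.1 this with h | h
    · linarith
    · linarith

lemma Kd_total {a b x : ℝ} (ha : 0 < a) (hb : 0 < b) (hx : 0 < x)
    [IsProbabilityMeasure (beta2 b a)] : ∫⁻ y, Kd a b x y = 1 := by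
  have := kernel_lem ha hb hx (g := fun _ => 1) measurable_const
  simpa using this.symm

lemma law_lem {Ω : Type*} [MeasurableSpace Ω] (μ : Measure Ω)
    [IsProbabilityMeasure μ] (X W : Ω → ℝ)
    (hX : Measurable X) (hW : Measurable W) (hXpos : ∀ ω, 0 < X ω)
    (a b : ℝ) (ha : 0 < a) (hb : 0 < b)
    (hInd : IndepFun X W μ) (hWlaw : μ.map W = beta2 b a) :
    μ.map (fun ω => 1 / (1 + X ω * W ω)) =
      volume.withDensity (fun y => ∫⁻ x, Kd a b x y ∂(μ.map X)) := by
  have hpX : IsProbabilityMeasure (μ.map X) := Measure.isProbabilityMeasure_map hX.aemeasurable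
  have hpW : IsProbabilityMeasure (μ.map W) := Measure.isProbabilityMeasure_map hW.aemeasurable
  have hp := (indepFun_iff_map_prod_eq_prod_map_map hX.aemeasurable hW.aemeasurable).1 hInd
  have hK := measurable_Kd a b
  have hm : Measurable fun p : ℝ × ℝ => 1 / (1 + p.1 * p.2) := by fun_prop
  ext A hA
  have hi : Measurable (A.indicator (1 : ℝ → ℝ≥0∞)) := measurable_one.indicator hA
  have e0 : μ.map (fun ω => 1 / (1 + X ω * W ω))
      = ((μ.map X).prod (μ.map W)).map (fun p : ℝ × ℝ => 1 / (1 + p.1 * p.2)) := by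
    rw [← hp, Measure.map_map hm (by fun_prop)]
    rfl
  rw [e0, ← lintegral_indicator_one hA, lintegral_map hi hm,
    lintegral_prod _ (by exact (hi.comp hm).aemeasurable), withDensity_apply _ hA]
  have hae : ∀ᵐ x ∂(μ.map X), 0 < x := by
    rw [ae_map_iff hX.aemeasurable measurableSet_Ioi]
    exact ae_of_all _ hXpos
  have e1 : ∀ᵐ x ∂(μ.map X), ∫⁻ w, A.indicator (1 : ℝ → ℝ≥0∞) (1 / (1 + x * w)) ∂(μ.map W)
      = ∫⁻ y, Kd a b x y * A.indicator (1 : ℝ → ℝ≥0∞) y := by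
    filter_upwards [hae] with x hx
    rw [hWlaw]
    exact kernel_lem ha hb hx hi
  rw [lintegral_congr_ae e1, lintegral_lintegral_swap, ← lintegral_indicator hA]
  · refine lintegral_congr fun y => ?_
    by_cases hy : y ∈ A
    · simp [hy]
    · simp [hy]
  · exact (hK.mul (hi.comp measurable_snd)).aemeasurable

/-- the target density is a fixed point -/
lemma bh_fixed {a b : ℝ} (ha : 0 < a) (hb : 0 < b) (y : ℝ) :
    ∫⁻ x, Kd a b x y ∂(bhMeasure a a b) = ENNReal.ofReal (bhDens a a b y) := by
  have gb := Real.Gamma_pos_of_pos hb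
  have ga := Real.Gamma_pos_of_pos ha
  have gab := Real.Gamma_pos_of_pos (add_pos hb ha)
  have hK := measurable_Kd a b
  have hm := measurable_Fh a b
  have hC := Cbh_pos ha hb
  have hKy : Measurable fun x => Kd a b x y := hK.comp (measurable_id.prodMk measurable_const)
  rw [bhMeasure, lintegral_withDensity_eq_lintegral_mul _ (measurable_bh ha hb) hKy]
  by_cases hy : y ∈ Ioo (0:ℝ) 1
  · rw [bh_dens_eq ha hb, indicator_of_mem hy, ← lint_L5 ha hb hy.1 hy.2,
      ← lintegral_const_mul _ (by fun_prop), ← lintegral_const_mul _ (by fun_prop),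
      ← lintegral_indicator measurableSet_Ioo]
    refine lintegral_congr fun x => ?_
    simp only [Pi.mul_apply]
    rw [bh_dens_eq ha hb]
    by_cases hx : x ∈ Ioo (0:ℝ) 1
    · rw [indicator_of_mem hx, indicator_of_mem hx, Kd, if_pos ⟨hx.1, hy.1, hy.2⟩]
      have hx0 := hx.1
      have hx1 : 0 < 1 - x := by linarith [hx.2]
      have h0 := hy.1
      have h1 : 0 < 1 - y := by linarith [hy.2]
      have h2 : 0 < 1 - y * (1 - x) := by nlinarith [mul_pos h0 hx0]
      rw [mul_assoc (ENNReal.ofReal (Cbh a a b)), mul_right_comm (ENNReal.ofReal _) (Fh a b x),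
        ← mul_assoc (ENNReal.ofReal (y ^ (a - 1) * _)),
        ← ENNReal.ofReal_mul (by positivity), ← ENNReal.ofReal_mul (by positivity)]
      congr 3
      rw [show a + a - 1 = (a - 1) + a by ring, Real.rpow_add hx0]
      ring
    · rw [indicator_of_notMem hx, indicator_of_notMem hx, zero_mul]
  · rw [bh_dens_eq ha hb, indicator_of_notMem hy]
    simp [Kd_zero hy]

/-- comparison: a positive part is invariant -/
lemma part_inv {a b : ℝ} (ha : 0 < a) (hb : 0 < b) [IsProbabilityMeasure (beta2 b a)]
    {f g : ℝ → ℝ≥0∞} (hf : Measurable f) (hg : Measurable g)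
    (hf1 : ∫⁻ x, f x = 1) (hg1 : ∫⁻ x, g x = 1) (hg0 : ∀ x ≤ 0, g x = 0)
    (hfi : ∀ y, ∫⁻ x, f x * Kd a b x y = f y) (hgi : ∀ y, ∫⁻ x, g x * Kd a b x y = g y) :
    ∀ᵐ y, ∫⁻ x, (g x - f x) * Kd a b x y = g y - f y := by
  have hK := measurable_Kd a b
  have hv : Measurable fun x => g x - f x := hg.sub hf
  have hvfin : ∫⁻ x, (g x - f x) ≠ ⊤ := by
    refine ne_top_of_le_ne_top (b := 1) (by simp) ?_
    rw [← hg1]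
    exact lintegral_mono fun x => tsub_le_self
  have hle : (fun y => g y - f y) ≤ᵐ[volume] fun y => ∫⁻ x, (g x - f x) * Kd a b x y := by
    refine ae_of_all _ fun y => ?_
    have hKy : Measurable fun x => Kd a b x y := hK.comp (measurable_id.prodMk measurable_const)
    simp only
    rw [tsub_le_iff_right]
    calc g y = ∫⁻ x, g x * Kd a b x y := (hgi y).symm
      _ ≤ ∫⁻ x, ((g x - f x) * Kd a b x y + f x * Kd a b x y) := by
        refine lintegral_mono fun x => ?_
        simp only
        rw [← add_mul]
        gcongr
        exact le_tsub_add
      _ = _ := by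
        rw [lintegral_add_left (by exact hv.mul hKy), hfi]
  have htot : ∫⁻ y, ∫⁻ x, (g x - f x) * Kd a b x y = ∫⁻ x, (g x - f x) := by
    rw [lintegral_lintegral_swap (by
      exact ((hv.comp measurable_snd).mul (hK.comp measurable_swap)).aemeasurable)]
    refine lintegral_congr fun x => ?_
    have hKx : Measurable fun y => Kd a b x y := hK.comp (measurable_const.prodMk measurable_id)
    rw [lintegral_const_mul _ hKx]
    by_cases hx : 0 < x
    · rw [Kd_total ha hb hx, mul_one]
    · rw [hg0 x (not_lt.1 hx)]; simp
  have hmT : Measurable fun y => ∫⁻ x, (g x - f x) * Kd a b x y := by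
    refine Measurable.lintegral_prod_right (f := fun y x => (g x - f x) * Kd a b x y) ?_
    exact (hv.comp measurable_snd).mul (hK.comp measurable_swap)
  have := ae_eq_of_ae_le_of_lintegral_le hle hvfin hmT.aemeasurable htot.le
  filter_upwards [this] with y hy using hy.symm

lemma ae_eq_of_le {f g : ℝ → ℝ≥0∞} (hf : Measurable f)
    (hf1 : ∫⁻ x, f x = 1) (hg1 : ∫⁻ x, g x = 1) (h : ∀ᵐ x, g x - f x = 0) : g =ᵐ[volume] f := by
  refine ae_eq_of_ae_le_of_lintegral_le ?_ (by rw [hg1]; simp) hf.aemeasurable (by rw [hf1, hg1])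
  filter_upwards [h] with x hx using tsub_eq_zero_iff_le.1 hx

lemma uniq {a b : ℝ} (ha : 0 < a) (hb : 0 < b) [IsProbabilityMeasure (beta2 b a)]
    {f g : ℝ → ℝ≥0∞} (hf : Measurable f) (hg : Measurable g)
    (hf1 : ∫⁻ x, f x = 1) (hg1 : ∫⁻ x, g x = 1)
    (hfi : ∀ y, ∫⁻ x, f x * Kd a b x y = f y) (hgi : ∀ y, ∫⁻ x, g x * Kd a b x y = g y) :
    f =ᵐ[volume] g := by
  have hK := measurable_Kd a b
  have z : ∀ {f : ℝ → ℝ≥0∞}, (∀ y, ∫⁻ x, f x * Kd a b x y = f y) →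
      ∀ y, y ∉ Ioo (0:ℝ) 1 → f y = 0 := by
    intro f h y hy
    rw [← h y]
    simp [Kd_zero hy]
  have hf0 : ∀ x ≤ 0, f x = 0 := fun x hx => z hfi x fun h => by linarith [h.1]
  have hg0 : ∀ x ≤ 0, g x = 0 := fun x hx => z hgi x fun h => by linarith [h.1]
  have h1 := part_inv ha hb hf hg hf1 hg1 hg0 hfi hgi
  by_cases hu : ∀ᵐ x, g x - f x = 0
  · exact (ae_eq_of_le hf hf1 hg1 hu).symm
  · refine ae_eq_of_le hg hg1 hf1 ?_
    filter_upwards [h1] with y hy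
    by_cases hyI : y ∈ Ioo (0:ℝ) 1
    · have hKy : Measurable fun x => Kd a b x y := hK.comp (measurable_id.prodMk measurable_const)
      have hne : g y - f y ≠ 0 := by
        intro h0
        rw [h0, lintegral_eq_zero_iff (by exact (hg.sub hf).mul hKy)] at hy
        apply hu
        filter_upwards [hy] with x hx
        by_cases hx0 : 0 < x
        · rcases mul_eq_zero.1 hx with h | h
          · exact h
          · exact absurd h (Kd_pos ha hb hx0 hyI)
        · rw [hg0 x (not_lt.1 hx0)]; simp
      rw [tsub_eq_zero_iff_le]
      by_contra hlt
      exact hne (tsub_eq_zero_of_le (not_le.1 hlt).le)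
    · rw [z hfi y hyI]; simp

theorem bh_characterization_symmetric {Ω : Type*} [MeasurableSpace Ω] (μ : Measure Ω)
    [IsProbabilityMeasure μ] (X W : Ω → ℝ)
    (hX : Measurable X) (hW : Measurable W) (hXpos : ∀ ω, 0 < X ω)
    (a b : ℝ) (ha : 0 < a) (hb : 0 < b)
    (hInd : IndepFun X W μ) (hWlaw : μ.map W = beta2 b a) :
    μ.map X = μ.map (fun ω => 1 / (1 + X ω * W ω)) ↔ μ.map X = bhMeasure a a b := by

  have hpX : IsProbabilityMeasure (μ.map X) := Measure.isProbabilityMeasure_map hX.aemeasurable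
  have hpW : IsProbabilityMeasure (beta2 b a) := by
    rw [← hWlaw]; exact Measure.isProbabilityMeasure_map hW.aemeasurable
  rw [law_lem μ X W hX hW hXpos a b ha hb hInd hWlaw]
  have hK := measurable_Kd a b
  constructor
  · intro h
    set f : ℝ → ENNReal := fun y => ∫⁻ x, Kd a b x y ∂(μ.map X) with hfdef
    have hf : Measurable f :=
      Measurable.lintegral_prod_right (f := fun y x => Kd a b x y) (hK.comp measurable_swap)
    have hf1 : ∫⁻ x, f x = 1 := by
      have : (volume.withDensity f) univ = 1 := by rw [← h]; exact measure_univ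
      simpa using this
    have hKy : ∀ y, Measurable fun x => Kd a b x y := fun y =>
      hK.comp (measurable_id.prodMk measurable_const)
    have hfi : ∀ y, ∫⁻ x, f x * Kd a b x y = f y := by
      intro y
      have : f y = ∫⁻ x, Kd a b x y ∂(volume.withDensity f) := by rw [← h]
      rw [this, lintegral_withDensity_eq_lintegral_mul _ hf (hKy y)]
      rfl
    have hgi : ∀ y, ∫⁻ x, ENNReal.ofReal (bhDens a a b x) * Kd a b x y
        = ENNReal.ofReal (bhDens a a b y) := by
      intro y
      rw [← bh_fixed ha hb y, bhMeasure,
        lintegral_withDensity_eq_lintegral_mul _ (measurable_bh ha hb) (hKy y)]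
      rfl
    rw [h, bhMeasure]
    exact withDensity_congr_ae
      (uniq ha hb hf (measurable_bh ha hb) hf1 (bh_total ha hb) hfi hgi)
  · intro h
    rw [h]
    simp_rw [bh_fixed ha hb]
    rfl
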